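/- In any deliberation space, there is no infinite sequence D₀, D₁, D₂, … of deliberative coalition structures in which each consecutive pair (D_i, D_{i+1}) is a compromise transition; that is, every deliberation consisting of compromise transitions is finite. -/

import Mathlib

/-!
The potential `∑ (2 ^ |C| - 1)` over the coalitions of a structure strictly increases along every
compromise transition (`potential_lt_of_transition`): if the new coalition has size `m`, the two
coalitions it draws from have size at most `m - 1`, so they contributed at most
`2 * (2 ^ (m - 1) - 1) = 2 ^ m - 2`, which is less than the `2 ^ m - 1` of the new coalition alone.
By superadditivity the potential of a structure is less than `2 ^ |V|` (`potential_lt`), since the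
coalition sizes add up to `|V|`. A strictly increasing sequence of naturals is unbounded, so no
infinite sequence of transitions exists.
-/

/-!
Formalization of deliberative coalition formation (Elkind et al., "United for Change:
Deliberative Coalition Formation to Change the Status Quo").

Agents and proposals live in a metric space `M`; `V` is the finite set of agents,
`X ⊆ M` the set of proposals, `r ∈ X` the status quo.  A deliberative coalition
structure is a multiset of deliberative coalitions whose agent sets partition `V`
(empty coalitions are allowed).
-/

open scoped Classical
noncomputable section

variable {M : Type*}

/-- Agent `v` approves proposal `p` relative to status quo `r`
if `v` is strictly closer to `p` than to `r`. -/
def Approves [MetricSpace M] (r v p : M) : Prop := dist v p < dist v r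

/-- The set `C^p` of agents in `C` that approve proposal `p`. -/
def approvers [MetricSpace M] (r : M) (C : Finset M) (p : M) : Finset M :=
  C.filter fun v => Approves r v p

/-- `(C, p)` is a deliberative coalition: `C ⊆ V`, `p ∈ X`, and either `p = r` and no
agent of `C` approves any proposal in `X \ {r}`, or `p ≠ r` and every agent of `C`
approves `p`. -/
def IsCoalition [MetricSpace M] (V : Finset M) (X : Set M) (r : M)
    (C : Finset M) (p : M) : Prop :=
  C ⊆ V ∧ p ∈ X ∧
    ((p = r ∧ ∀ v ∈ C, ∀ x ∈ X, x ≠ r → ¬ Approves r v x) ∨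
     (p ≠ r ∧ ∀ v ∈ C, Approves r v p))

/-- `D` is a deliberative coalition structure: a (finite) multiset of deliberative
coalitions whose agent sets are pairwise disjoint with union `V` (equivalently, the
multiset sum of the agent sets is exactly `V`). Empty coalitions are allowed. -/
def IsStructure [MetricSpace M] (V : Finset M) (X : Set M) (r : M)
    (D : Multiset (Finset M × M)) : Prop :=
  (∀ c ∈ D, IsCoalition V X r c.1 c.2) ∧
    (D.map fun c => c.1.val).sum = V.val

/-- Compromise transition: the approvers of a proposal `p ∈ X` within two coalitions
`(C₁, p₁)` and `(C₂, p₂)` form a new coalition `(C₁^p ∪ C₂^p, p)` whose size exceeds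
both `|C₁|` and `|C₂|`, leaving the dissenters `(C₁ \ C₁^p, p₁)` and `(C₂ \ C₂^p, p₂)`
behind. -/
def CompromiseTransition [MetricSpace M] (V : Finset M) (X : Set M) (r : M)
    (D D' : Multiset (Finset M × M)) : Prop :=
  IsStructure V X r D ∧ IsStructure V X r D' ∧
  ∃ (C₁ C₂ : Finset M) (p₁ p₂ p : M) (D₀ : Multiset (Finset M × M)),
    p ∈ X ∧
    C₁.card < (approvers r C₁ p ∪ approvers r C₂ p).card ∧
    C₂.card < (approvers r C₁ p ∪ approvers r C₂ p).card ∧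
    D = (C₁, p₁) ::ₘ (C₂, p₂) ::ₘ D₀ ∧
    D' = (approvers r C₁ p ∪ approvers r C₂ p, p) ::ₘ
         (C₁ \ approvers r C₁ p, p₁) ::ₘ (C₂ \ approvers r C₂ p, p₂) ::ₘ D₀

/-- The potential of a collection of coalitions, `∑ (2 ^ |C| - 1)`. Subtracting `1` makes empty
coalitions contribute nothing, so the potential stays bounded however many of them accumulate. -/
def potential (D : Multiset (Finset M × M)) : ℕ :=
  (D.map fun c => 2 ^ c.1.card - 1).sum

theorem potential_cons (c : Finset M × M) (D : Multiset (Finset M × M)) :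
    potential (c ::ₘ D) = (2 ^ c.1.card - 1) + potential D := by
  simp [potential]

/-- The potential is bounded in terms of the total number of agents, because
`k ↦ 2 ^ k - 1` is superadditive. -/
theorem potential_lt (D : Multiset (Finset M × M)) :
    potential D < 2 ^ Multiset.card (D.map fun c => c.1.val).sum := by
  induction D using Multiset.induction_on with
  | empty => simp [potential]
  | cons c D ih =>
    rw [potential_cons, Multiset.map_cons, Multiset.sum_cons, Multiset.card_add, pow_add,
      Finset.card_val]
    have h : 1 ≤ 2 ^ c.1.card := Nat.one_le_two_pow
    obtain ⟨k, hk⟩ := Nat.exists_eq_add_of_le h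
    rw [hk, Nat.add_sub_cancel_left]
    nlinarith

theorem potential_lt_of_transition [MetricSpace M] {V : Finset M} {X : Set M} {r : M}
    {D D' : Multiset (Finset M × M)} (h : CompromiseTransition V X r D D') :
    potential D < potential D' := by
  obtain ⟨-, -, C₁, C₂, p₁, p₂, p, D₀, -, h₁, h₂, rfl, rfl⟩ := h
  simp only [potential_cons]
  generalize (approvers r C₁ p ∪ approvers r C₂ p).card = m at *
  obtain ⟨k, rfl⟩ : ∃ k, m = k + 1 := ⟨m - 1, by omega⟩
  -- Both old coalitions have size at most `k`, so they contribute at most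
  -- `2 * (2 ^ k - 1) < 2 ^ (k + 1) - 1`.
  have e₁ : 2 ^ C₁.card ≤ 2 ^ k := Nat.pow_le_pow_right (by norm_num) (by omega)
  have e₂ : 2 ^ C₂.card ≤ 2 ^ k := Nat.pow_le_pow_right (by norm_num) (by omega)
  have e₃ : 1 ≤ 2 ^ C₁.card := Nat.one_le_two_pow
  have e₄ : 1 ≤ 2 ^ C₂.card := Nat.one_le_two_pow
  rw [pow_succ]
  omega

/-- In any deliberation space there is no infinite sequence of
deliberative coalition structures in which each consecutive pair is a compromise
transition: every deliberation consisting of compromise transitions is finite. -/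
theorem compromise_deliberation_finite [MetricSpace M]
    (V : Finset M) (X : Set M) (r : M) (hr : r ∈ X) :
    ¬ ∃ Ds : ℕ → Multiset (Finset M × M),
        ∀ i : ℕ, CompromiseTransition V X r (Ds i) (Ds (i + 1)) := by
  rintro ⟨Ds, h⟩
  have mono : StrictMono fun i => potential (Ds i) :=
    strictMono_nat_of_lt_succ fun i => potential_lt_of_transition (h i)
  have bound := potential_lt (Ds (2 ^ V.card))
  rw [(h _).1.2, Finset.card_val] at bound
  exact absurd (mono.le_apply (x := 2 ^ V.card)) (not_le.mpr bound)
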